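/- (KKL level-set consequence) Let A ⊆ {0,1}^n be nonempty with |A| ≥ 2^{n-c} for some c ≥ 1, and let f : {0,1}^n → {0,1} be its characteristic function. Then for every integer k with 1 ≤ k ≤ 4c, we have (2^{2n}/|A|²) · ∑_{v : |v| = k} f̂(v)² ≤ (4√2·c / k)^k. -/

import Mathlib

open Finset

open scoped Classical

noncomputable def boolFourier {n : ℕ} (f : (Fin n → ZMod 2) → ℝ) (s : Fin n → ZMod 2) : ℝ :=
  ((2 : ℝ) ^ n)⁻¹ * ∑ y : Fin n → ZMod 2, f y * (-1 : ℝ) ^ (∑ i, y i * s i : ZMod 2).val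

/-- The character `x ↦ (-1)^{x·v}` of the Boolean cube. -/
noncomputable def boolChar {n : ℕ} (x v : Fin n → ZMod 2) : ℝ :=
  (-1 : ℝ) ^ (∑ i, x i * v i : ZMod 2).val

lemma neg_one_pow_val_add (a b : ZMod 2) :
    (-1 : ℝ) ^ (a + b).val = (-1) ^ a.val * (-1) ^ b.val := by
  have h : ∀ a b : ZMod 2, (-1 : ℤ) ^ (a + b).val = (-1) ^ a.val * (-1) ^ b.val := by decide
  exact_mod_cast h a b

lemma boolChar_cons {n : ℕ} (a b : ZMod 2) (x v : Fin n → ZMod 2) :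
    boolChar (Fin.cons a x : Fin (n + 1) → ZMod 2) (Fin.cons b v) =
      (-1) ^ (a * b).val * boolChar x v := by
  simp only [boolChar, Fin.sum_univ_succ, Fin.cons_zero, Fin.cons_succ, neg_one_pow_val_add]

lemma sum_zmod_two (g : ZMod 2 → ℝ) : ∑ a, g a = g 0 + g 1 := Fin.sum_univ_two g

lemma sum_cube_succ {n : ℕ} (g : (Fin (n + 1) → ZMod 2) → ℝ) :
    ∑ x, g x = ∑ x : Fin n → ZMod 2, (g (Fin.cons 0 x) + g (Fin.cons 1 x)) := by
  rw [← (Fin.consEquiv (fun _ => ZMod 2)).sum_comp, Fintype.sum_prod_type_right]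
  exact Finset.sum_congr rfl fun x _ => sum_zmod_two _

lemma pow_card_support_cons {n : ℕ} (r : ℝ) (b : ZMod 2) (v : Fin n → ZMod 2) :
    r ^ (univ.filter fun i => (Fin.cons b v : Fin (n + 1) → ZMod 2) i ≠ 0).card =
      (if b ≠ 0 then r else 1) * r ^ (univ.filter fun i => v i ≠ 0).card := by
  have h : ∀ {N : ℕ} (w : Fin N → ZMod 2),
      r ^ (univ.filter fun i => w i ≠ 0).card = ∏ i, if w i ≠ 0 then r else 1 := by
    intro N w
    rw [Finset.prod_ite]
    simp
  rw [h, h, Fin.prod_univ_succ]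
  simp only [Fin.cons_zero, Fin.cons_succ]

lemma choose_two_mul_le (m j : ℕ) :
    ((2 * m).choose (2 * j) : ℝ) ≤ m.choose j * (2 * m - 1) ^ j := by
  induction j with
  | zero => simp
  | succ j ih =>
    rcases Nat.lt_or_ge j m with hj | hj
    · have h1 := Nat.choose_succ_right_eq (2 * m) (2 * j)
      have h2 := Nat.choose_succ_right_eq (2 * m) (2 * j + 1)
      have h3 := Nat.choose_succ_right_eq m j
      obtain ⟨d, rfl⟩ : ∃ d, m = j + 1 + d := ⟨m - (j + 1), by omega⟩
      rw [show 2 * (j + 1 + d) - 2 * j = 2 * d + 2 by omega] at h1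
      rw [show 2 * (j + 1 + d) - (2 * j + 1) = 2 * d + 1 by omega] at h2
      rw [show j + 1 + d - j = d + 1 by omega] at h3
      rw [show 2 * (j + 1) = 2 * j + 1 + 1 by ring]
      generalize (2 * (j + 1 + d)).choose (2 * j + 1 + 1) = p at *
      generalize (2 * (j + 1 + d)).choose (2 * j + 1) = q at *
      generalize (2 * (j + 1 + d)).choose (2 * j) = s at *
      generalize (j + 1 + d).choose (j + 1) = u at *
      generalize (j + 1 + d).choose j = w at *
      have e1 : (q : ℝ) * (2 * j + 1) = s * (2 * d + 2) := by exact_mod_cast h1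
      have e2 : (p : ℝ) * (2 * j + 1 + 1) = q * (2 * d + 1) := by exact_mod_cast h2
      have e3 : (u : ℝ) * (j + 1) = w * (d + 1) := by exact_mod_cast h3
      push_cast at ih ⊢
      have hj0 : (0 : ℝ) ≤ j := j.cast_nonneg
      have hd0 : (0 : ℝ) ≤ d := d.cast_nonneg
      set r : ℝ := 2 * ((j : ℝ) + 1 + d) - 1 with hr
      have hr' : 2 * (d : ℝ) + 1 ≤ r * (2 * j + 1) := by rw [hr]; nlinarith [mul_nonneg hj0 hd0]
      have hr0 : 0 ≤ r := by rw [hr]; linarith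
      have hs : (p : ℝ) * ((j + 1) * (2 * j + 1)) = s * (d + 1) * (2 * d + 1) := by
        linear_combination (2 * (j : ℝ) + 1) / 2 * e2 + (2 * (d : ℝ) + 1) / 2 * e1
      have hpos : (0 : ℝ) < (j + 1) * (2 * j + 1) := by positivity
      refine le_of_mul_le_mul_right ?_ hpos
      calc (p : ℝ) * ((j + 1) * (2 * j + 1)) = s * (d + 1) * (2 * d + 1) := hs
        _ ≤ (w * r ^ j) * (d + 1) * (r * (2 * j + 1)) := by gcongr
        _ = u * r ^ (j + 1) * ((j + 1) * (2 * j + 1)) := by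
          linear_combination (-(r ^ (j + 1) * (2 * (j : ℝ) + 1))) * e3
    · rw [Nat.choose_eq_zero_of_lt (by omega), Nat.choose_eq_zero_of_lt (by omega)]
      simp

lemma sum_range_two_mul_add_one (g : ℕ → ℝ) (m : ℕ) (hg : ∀ j, g (2 * j + 1) = 0) :
    ∑ i ∈ range (2 * m + 1), g i = ∑ j ∈ range (m + 1), g (2 * j) := by
  induction m with
  | zero => simp
  | succ m ih =>
    rw [show 2 * (m + 1) + 1 = 2 * m + 1 + 1 + 1 by ring, sum_range_succ, sum_range_succ, ih,
      hg, sum_range_succ _ (m + 1), add_zero]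
    rfl

/-- The two-point hypercontractive inequality with even exponent. -/
lemma add_pow_add_sub_pow_le (m : ℕ) (a b : ℝ) :
    (a + b) ^ (2 * m) + (a - b) ^ (2 * m) ≤ 2 * (a ^ 2 + (2 * m - 1) * b ^ 2) ^ m := by
  have h : (a + b) ^ (2 * m) + (a - b) ^ (2 * m) =
      ∑ j ∈ range (m + 1), 2 * ((b ^ 2) ^ j * (a ^ 2) ^ (m - j) * (2 * m).choose (2 * j)) := by
    rw [add_comm a b, show a - b = -b + a by ring, add_pow, add_pow, ← sum_add_distrib,
      sum_range_two_mul_add_one]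
    · refine sum_congr rfl fun j _ => ?_
      rw [← Nat.mul_sub, pow_mul, pow_mul, pow_mul, neg_sq]
      ring
    · intro j
      rw [Odd.neg_pow ⟨j, rfl⟩]
      ring
  rw [h, add_comm (a ^ 2), add_pow, mul_sum]
  refine sum_le_sum fun j _ => ?_
  have hc := choose_two_mul_le m j
  have h0 : 0 ≤ (b ^ 2) ^ j * (a ^ 2) ^ (m - j) := by positivity
  rw [mul_pow]
  nlinarith [mul_le_mul_of_nonneg_left hc h0]

/-- Minkowski's inequality for natural exponents, in terms of power means. -/
lemma sum_add_pow_le {ι : Type*} (s : Finset ι) (X Y : ι → ℝ) (hX : ∀ i, 0 ≤ X i)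
    (hY : ∀ i, 0 ≤ Y i) {m : ℕ} (hm : 1 ≤ m) {N α β : ℝ} (hN : 0 ≤ N) (hα : 0 ≤ α) (hβ : 0 ≤ β)
    (h1 : ∑ i ∈ s, X i ^ m ≤ N * α ^ m) (h2 : ∑ i ∈ s, Y i ^ m ≤ N * β ^ m) :
    ∑ i ∈ s, (X i + Y i) ^ m ≤ N * (α + β) ^ m := by
  have hm0 : m ≠ 0 := by omega
  have hL := Real.Lp_add_le_of_nonneg (s := s) (f := X) (g := Y) (p := (m : ℝ))
    (by exact_mod_cast hm) (fun i _ => hX i) (fun i _ => hY i)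
  simp only [Real.rpow_natCast, one_div] at hL
  have hroot : ∀ {S γ : ℝ}, 0 ≤ S → 0 ≤ γ → S ≤ N * γ ^ m →
      S ^ (m : ℝ)⁻¹ ≤ N ^ (m : ℝ)⁻¹ * γ := by
    intro S γ hS hγ hle
    calc S ^ (m : ℝ)⁻¹ ≤ (N * γ ^ m) ^ (m : ℝ)⁻¹ := by gcongr
      _ = _ := by rw [Real.mul_rpow hN (by positivity), Real.pow_rpow_inv_natCast hγ hm0]
  have hX' := hroot (sum_nonneg fun i _ => pow_nonneg (hX i) m) hα h1
  have hY' := hroot (sum_nonneg fun i _ => pow_nonneg (hY i) m) hβ h2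
  have hXY : 0 ≤ ∑ i ∈ s, (X i + Y i) ^ m :=
    sum_nonneg fun i _ => pow_nonneg (add_nonneg (hX i) (hY i)) m
  have h3 : (∑ i ∈ s, (X i + Y i) ^ m) ^ (m : ℝ)⁻¹ ≤ N ^ (m : ℝ)⁻¹ * (α + β) := by linarith
  calc ∑ i ∈ s, (X i + Y i) ^ m = ((∑ i ∈ s, (X i + Y i) ^ m) ^ (m : ℝ)⁻¹) ^ m :=
        (Real.rpow_inv_natCast_pow hXY hm0).symm
    _ ≤ (N ^ (m : ℝ)⁻¹ * (α + β)) ^ m := by gcongr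
    _ = N * (α + β) ^ m := by rw [mul_pow, Real.rpow_inv_natCast_pow hN hm0]

/-- Bonami's hypercontractive inequality from `L²` to `L^{2m}`, in terms of Fourier coefficients. -/
lemma bonami_even {m : ℕ} (hm : 1 ≤ m) (n : ℕ) (g : (Fin n → ZMod 2) → ℝ) :
    ∑ x, (∑ v, g v * boolChar x v) ^ (2 * m) ≤
      2 ^ n * (∑ v, (2 * m - 1 : ℝ) ^ (univ.filter fun i => v i ≠ 0).card * g v ^ 2) ^ m := by
  have hr : (0 : ℝ) ≤ 2 * m - 1 := by
    have : (1 : ℝ) ≤ m := by exact_mod_cast hm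
    linarith
  induction n with
  | zero => simp [boolChar, pow_mul]
  | succ n ih =>
    set g₀ : (Fin n → ZMod 2) → ℝ := fun v => g (Fin.cons 0 v) with hg₀
    set g₁ : (Fin n → ZMod 2) → ℝ := fun v => g (Fin.cons 1 v) with hg₁
    have hc0 : ∀ x : Fin n → ZMod 2,
        ∑ v, g v * boolChar (Fin.cons 0 x : Fin (n + 1) → ZMod 2) v =
          ∑ v, g₀ v * boolChar x v + ∑ v, g₁ v * boolChar x v := by
      intro x
      rw [sum_cube_succ, ← sum_add_distrib]
      simp [boolChar_cons, hg₀, hg₁]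
    have hc1 : ∀ x : Fin n → ZMod 2,
        ∑ v, g v * boolChar (Fin.cons 1 x : Fin (n + 1) → ZMod 2) v =
          ∑ v, g₀ v * boolChar x v - ∑ v, g₁ v * boolChar x v := by
      intro x
      rw [sum_cube_succ, ← sum_sub_distrib]
      simp [boolChar_cons, hg₀, hg₁, ZMod.val_one, sub_eq_add_neg]
    have hw : ∑ v, (2 * m - 1 : ℝ) ^ (univ.filter fun i => v i ≠ 0).card * g v ^ 2 =
        ∑ v, (2 * m - 1 : ℝ) ^ (univ.filter fun i => v i ≠ 0).card * g₀ v ^ 2 +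
        (2 * m - 1) *
          ∑ v, (2 * m - 1 : ℝ) ^ (univ.filter fun i => v i ≠ 0).card * g₁ v ^ 2 := by
      rw [sum_cube_succ, mul_sum, ← sum_add_distrib]
      refine sum_congr rfl fun v _ => ?_
      rw [pow_card_support_cons, pow_card_support_cons]
      simp [hg₀, hg₁, mul_assoc]
    rw [sum_cube_succ, hw]
    simp only [hc0, hc1]
    have h0 := ih g₀
    have h1 := ih g₁
    simp only [pow_mul] at h0 h1
    calc _ ≤ ∑ x, 2 * ((∑ v, g₀ v * boolChar x v) ^ 2 +
            (2 * m - 1) * (∑ v, g₁ v * boolChar x v) ^ 2) ^ m :=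
          sum_le_sum fun x _ => add_pow_add_sub_pow_le m _ _
      _ = 2 * ∑ x, ((∑ v, g₀ v * boolChar x v) ^ 2 +
            (2 * m - 1) * (∑ v, g₁ v * boolChar x v) ^ 2) ^ m := by rw [mul_sum]
      _ ≤ _ := by
          rw [pow_succ' (2 : ℝ), mul_assoc (2 : ℝ)]
          refine mul_le_mul_of_nonneg_left (sum_add_pow_le _ _ _ (fun _ => by positivity)
            (fun _ => by positivity) hm (by positivity)
            (sum_nonneg fun _ _ => by positivity)
            (mul_nonneg hr (sum_nonneg fun _ _ => by positivity)) h0 ?_) (by norm_num)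
          simp only [mul_pow (2 * (m : ℝ) - 1), ← mul_sum]
          rw [mul_left_comm]
          exact mul_le_mul_of_nonneg_left h1 (by positivity)

/-- The level-`k` inequality obtained from hypercontractivity with exponent `2m`. -/
lemma level_weight_pow_le {n : ℕ} (A : Finset (Fin n → ZMod 2)) (hAne : A.Nonempty)
    (f : (Fin n → ZMod 2) → ℝ) (hf : ∀ x, f x = if x ∈ A then 1 else 0) (k : ℕ)
    {m : ℕ} (hm : 1 ≤ m) :
    ((2 : ℝ) ^ (2 * n) / (A.card : ℝ) ^ 2 *
        ∑ v ∈ univ.filter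
            (fun v : Fin n → ZMod 2 => (univ.filter fun i => v i ≠ 0).card = k),
          (boolFourier f v) ^ 2) ^ m ≤ 2 ^ n / A.card * ((2 * m - 1) ^ m) ^ k := by
  have hcard : (0 : ℝ) < A.card := by exact_mod_cast hAne.card_pos
  have hr : (0 : ℝ) ≤ 2 * m - 1 := by
    have : (1 : ℝ) ≤ m := by exact_mod_cast hm
    linarith
  set W := ∑ v ∈ univ.filter
      (fun v : Fin n → ZMod 2 => (univ.filter fun i => v i ≠ 0).card = k),
      (boolFourier f v) ^ 2 with hW
  have hW0 : 0 ≤ W := sum_nonneg fun _ _ => by positivity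
  rcases hW0.eq_or_lt with h0 | hWpos
  · rw [← h0, mul_zero, zero_pow (by omega)]
    positivity
  set g : (Fin n → ZMod 2) → ℝ :=
    fun v => if (univ.filter fun i => v i ≠ 0).card = k then boolFourier f v else 0 with hg
  set G : (Fin n → ZMod 2) → ℝ := fun x => ∑ v, g v * boolChar x v with hG
  have hdual : ∑ x ∈ A, G x = 2 ^ n * W := by
    have hF : ∀ v, ∑ x ∈ A, boolChar x v = 2 ^ n * boolFourier f v := by
      intro v
      rw [boolFourier, mul_inv_cancel_left₀ (by positivity)]
      simp [hf, boolChar]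
    rw [hG, sum_comm]
    simp only [← mul_sum, hF]
    rw [hW, sum_filter, mul_sum]
    refine sum_congr rfl fun v _ => ?_
    simp only [hg]
    split_ifs <;> ring
  have hbon : ∑ x, G x ^ (2 * m) ≤ 2 ^ n * ((2 * m - 1) ^ k * W) ^ m := by
    refine (bonami_even hm n g).trans_eq ?_
    congr 2
    rw [hW, mul_sum, sum_filter]
    refine sum_congr rfl fun v _ => ?_
    simp only [hg]
    split_ifs with h
    · rw [h]
    · simp
  have hhold : (2 ^ n * W) ^ (2 * m) ≤ (A.card : ℝ) ^ (2 * m - 1) * ∑ x ∈ A, G x ^ (2 * m) := by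
    obtain ⟨l, hl⟩ : ∃ l, 2 * m = l + 1 := ⟨2 * m - 1, by omega⟩
    have hp := pow_sum_div_card_le_sum_pow (s := A) (f := fun x => |G x|)
      (fun _ _ => abs_nonneg _) l
    rw [div_le_iff₀' (by positivity), ← hl] at hp
    have heven : Even (2 * m) := even_two_mul m
    simp only [heven.pow_abs] at hp
    rw [hl, Nat.add_sub_cancel, ← hl, ← hdual]
    refine le_trans ?_ hp
    rw [← heven.pow_abs]
    exact pow_le_pow_left₀ (abs_nonneg _) (abs_sum_le_sum_abs _ _) _
  have hsub : ∑ x ∈ A, G x ^ (2 * m) ≤ ∑ x, G x ^ (2 * m) :=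
    sum_le_sum_of_subset_of_nonneg (subset_univ _) fun x _ _ => by
      rw [pow_mul]; positivity
  have hmain : (2 ^ n * W) ^ (2 * m) ≤
      (A.card : ℝ) ^ (2 * m - 1) * (2 ^ n * ((2 * m - 1) ^ k * W) ^ m) :=
    hhold.trans (mul_le_mul_of_nonneg_left (hsub.trans hbon) (by positivity))
  have hpos : 0 < (A.card : ℝ) ^ (2 * m) * W ^ m := by positivity
  refine le_of_mul_le_mul_right ?_ hpos
  calc _ = (2 ^ n * W) ^ (2 * m) := by
        rw [mul_pow, div_pow, ← pow_mul, ← pow_mul, mul_pow, ← pow_mul]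
        field_simp
        ring
    _ ≤ _ := hmain
    _ = _ := by
        obtain ⟨l, hl⟩ : ∃ l, 2 * m = l + 1 := ⟨2 * m - 1, by omega⟩
        rw [hl, Nat.add_sub_cancel, pow_succ, mul_pow, ← pow_mul, ← pow_mul, mul_comm m k]
        field_simp

/-- An even exponent close to `t` nearly optimises the level inequality. -/
lemma exists_even_exponent {t : ℝ} (ht : 1 ≤ t) :
    ∃ m : ℕ, 1 ≤ m ∧ (2 : ℝ) ^ (t / 4) * (2 * m - 1) ^ m ≤ (Real.sqrt 2 * t) ^ m := by
  refine ⟨⌊(t + 1) / 2⌋₊, Nat.le_floor (by push_cast; linarith), ?_⟩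
  have hm1 : (1 : ℕ) ≤ ⌊(t + 1) / 2⌋₊ := Nat.le_floor (by push_cast; linarith)
  have hle := Nat.floor_le (show 0 ≤ (t + 1) / 2 by linarith)
  have hlt := Nat.lt_floor_add_one ((t + 1) / 2)
  generalize ⌊(t + 1) / 2⌋₊ = m at *
  have hm : (1 : ℝ) ≤ m := by exact_mod_cast hm1
  have hr : (0 : ℝ) < 2 * m - 1 := by linarith
  have hs : Real.sqrt 2 ^ m = (2 : ℝ) ^ ((m : ℝ) / 2) := by
    rw [Real.sqrt_eq_rpow, ← Real.rpow_natCast, ← Real.rpow_mul (by norm_num)]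
    congr 1
    ring
  rw [mul_pow, hs]
  rcases le_or_gt t (2 * m) with h | h
  · have h4 : t / 4 ≤ (m : ℝ) / 2 := by linarith
    have h1 : 2 * (m : ℝ) - 1 ≤ t := by linarith
    gcongr
    norm_num
  · have hB : (2 : ℝ) ^ (t / 4) ≤ 2 ^ ((m : ℝ) / 2) * (3 / 2) := by
      calc (2 : ℝ) ^ (t / 4) ≤ 2 ^ ((m : ℝ) / 2 + 1 / 4) :=
            Real.rpow_le_rpow_of_exponent_le (by norm_num) (by linarith)
        _ = 2 ^ ((m : ℝ) / 2) * 2 ^ (1 / 4 : ℝ) := Real.rpow_add (by norm_num) _ _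
        _ ≤ _ := by
          gcongr
          have hroot := rpow_one_add_le_one_add_mul_self (s := 1) (p := 1 / 4)
            (by norm_num) (by norm_num) (by norm_num)
          norm_num at hroot ⊢
          linarith
    have hber : 3 / 2 * (2 * m - 1 : ℝ) ^ m ≤ t ^ m := by
      have hb := one_add_mul_le_pow (a := 1 / (2 * m - 1 : ℝ)) (by
        have : 0 < 1 / (2 * m - 1 : ℝ) := by positivity
        linarith) m
      have h32 : (3 / 2 : ℝ) ≤ 1 + m * (1 / (2 * m - 1)) := by
        have : (1 / 2 : ℝ) ≤ m * (1 / (2 * m - 1)) := by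
          rw [mul_one_div, le_div_iff₀ hr]
          linarith
        linarith
      calc 3 / 2 * (2 * m - 1 : ℝ) ^ m ≤ (1 + 1 / (2 * m - 1)) ^ m * (2 * m - 1) ^ m := by
            gcongr
            exact h32.trans hb
        _ = (2 * m) ^ m := by
            rw [← mul_pow]
            congr 1
            field_simp
            ring
        _ ≤ t ^ m := by gcongr
    calc _ ≤ (2 : ℝ) ^ ((m : ℝ) / 2) * (3 / 2) * (2 * m - 1) ^ m := by gcongr
      _ = (2 : ℝ) ^ ((m : ℝ) / 2) * (3 / 2 * (2 * m - 1) ^ m) := by ring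
      _ ≤ _ := by gcongr

/-- KKL level-set consequence: for the characteristic function `f` of a set `A` with
`|A| ≥ 2^{n-c}`, `c ≥ 1`, and every `1 ≤ k ≤ 4c`,
`(2^{2n}/|A|²) ∑_{|v|=k} f̂(v)² ≤ (4√2·c/k)^k`. -/
theorem kkl_level_sets {n : ℕ} (c : ℝ) (hc : 1 ≤ c)
    (A : Finset (Fin n → ZMod 2)) (hAne : A.Nonempty)
    (hA : (2 : ℝ) ^ ((n : ℝ) - c) ≤ (A.card : ℝ))
    (f : (Fin n → ZMod 2) → ℝ) (hf : ∀ x, f x = if x ∈ A then 1 else 0)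
    (k : ℕ) (hk1 : 1 ≤ k) (hk2 : (k : ℝ) ≤ 4 * c) :
    (2 : ℝ) ^ (2 * n) / (A.card : ℝ) ^ 2 *
        ∑ v ∈ Finset.univ.filter
            (fun v : Fin n → ZMod 2 => (Finset.univ.filter fun i => v i ≠ 0).card = k),
          (boolFourier f v) ^ 2
      ≤ (4 * Real.sqrt 2 * c / (k : ℝ)) ^ k := by
  have hk : (0 : ℝ) < k := by exact_mod_cast hk1
  have hcard : (0 : ℝ) < A.card := by exact_mod_cast hAne.card_pos
  have ht : 1 ≤ 4 * c / k := by rwa [one_le_div hk]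
  obtain ⟨m, hm1, hm⟩ := exists_even_exponent ht
  have hm' : (1 : ℝ) ≤ m := by exact_mod_cast hm1
  have hr : (0 : ℝ) ≤ 2 * m - 1 := by linarith
  have hdensity : (2 : ℝ) ^ n / A.card ≤ ((2 : ℝ) ^ (4 * c / k / 4)) ^ k := by
    rw [← Real.rpow_natCast _ k, ← Real.rpow_mul (by norm_num),
      show 4 * c / k / 4 * k = c by field_simp, div_le_iff₀ hcard]
    calc (2 : ℝ) ^ n = 2 ^ c * 2 ^ ((n : ℝ) - c) := by
          rw [← Real.rpow_add (by norm_num), add_sub_cancel, Real.rpow_natCast]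
      _ ≤ _ := by gcongr
  refine le_of_pow_le_pow_left₀ (n := m) (by omega) (by positivity) ?_
  calc _ ≤ (2 : ℝ) ^ n / A.card * ((2 * m - 1) ^ m) ^ k := level_weight_pow_le A hAne f hf k hm1
    _ ≤ ((2 : ℝ) ^ (4 * c / k / 4)) ^ k * ((2 * m - 1) ^ m) ^ k := by gcongr
    _ = ((2 : ℝ) ^ (4 * c / k / 4) * (2 * m - 1) ^ m) ^ k := by rw [mul_pow]
    _ ≤ ((Real.sqrt 2 * (4 * c / k)) ^ m) ^ k := by gcongr
    _ = _ := by
      rw [← pow_mul, ← pow_mul, mul_comm m k]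
      congr 1
      ring
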